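/- Fix an integer ℓ≥1 and let the polynomials g_{ℓ,n}^m(q,x) (0≤m≤n) be defined by the recurrence g_{ℓ,n}^n(q,x) = g_{ℓ,n}(q,x) and g_{ℓ,n}^m(q,x) = g_{ℓ,n}^{m+1}(q,x) − x·q^{ℓ(n−m−1)}·g_{ℓ,n−1}^m(q,x) for 0≤m≤n−1. Then for all 0≤m≤n one has the combinatorial interpretation g_{ℓ,n}^m(q,x) = Σ_{σ ∈ G_{ℓ,n}^m} q^{fmaf σ} x^{fix σ}, where G_{ℓ,n}^m = {σ ∈ G_{ℓ,n} : σ(i) ≠ i for all i ≤ n−m}. -/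

import Mathlib

/-!
Write `Q = q ^ ℓ`, let `D n` be the generating function of `fmaj` over the colored derangements
of length `n`, and let `B n j` be the generating function of `(fmaf, fix)` over the colored
permutations whose first `j` positions are not fixed.

*Recurrence.* If `p` (counted from `0`) is the first fixed point of `σ`, deleting it leaves the
derangement part unchanged and lowers `maf` by exactly `p`. Hence
`B (n + 1) j = B (n + 1) (j + 1) + x q ^ (ℓ j) B n j`, which is the recurrence of the table.
Iterating it down to derangements gives `B n 0 = ∑ₖ xᵏ [n choose k]_Q D (n - k)`.

*Diagonal.* It remains to see that `gPoly ℓ n = B n 0`. The essential point is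
`[ℓ][2ℓ]⋯[nℓ] = ∑ₖ [n choose k]_Q D (n - k)`. The left side is the generating function of `fmaj`
over the whole group. For the right side, the argument of Wachs applies: the descents of `σ` do
not change when excedances are regarded as letters greater than all fixed points, the other
non-fixed letters as smaller, and the fixed points as copies of one letter. Thus `σ` behaves like
a shuffle of its derangement part with copies of one letter, and Garsia and Gessel's shuffle
theorem sums `Q ^ maj` over these shuffles. The same theorem, for a single copy of the letter,
computes the generating function of `fmaj` by inserting one letter at a time. By Cauchy's
`q`-binomial theorem, substituting the identity into the definition of `gPoly` yields `B n 0`.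
-/

open Finset

/-- A colored permutation in `G_{ℓ,n} ≅ C_ℓ ≀ S_n`: an underlying permutation of `Fin n`
together with a color (exponent of `ζ`) attached to each position. The letter at (0-based)
position `i` of the word of `σ` is `ζ^(σ.2 i) · (σ.1 i + 1)` (1-based value `σ.1 i + 1`). -/
abbrev CP (ℓ n : ℕ) := Equiv.Perm (Fin n) × (Fin n → Fin ℓ)

namespace CP

variable {ℓ n : ℕ}

/-- `gtLetter a b` : the letter `a = (colorIndex, value)` is greater than `b` in the order
`1 > ζ > ⋯ > ζ^{ℓ-1}` on colors, colors compared first. -/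
def gtLetter (a b : ℕ × ℕ) : Prop := a.1 < b.1 ∨ (a.1 = b.1 ∧ b.2 < a.2)

instance (a b : ℕ × ℕ) : Decidable (gtLetter a b) := by unfold gtLetter; infer_instance

/-- The letter (color index, 0-based absolute value) at 0-based position `i`. -/
def letter (σ : CP ℓ n) (i : ℕ) : ℕ × ℕ :=
  if h : i < n then ((σ.2 ⟨i, h⟩ : ℕ), (σ.1 ⟨i, h⟩ : ℕ)) else (0, 0)

/-- 0-based descent positions : `i < n-1` such that `x_{i+1} > x_{i+2}` (1-based positions). -/
def desSet (σ : CP ℓ n) : Finset ℕ :=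
  (range (n - 1)).filter fun i => gtLetter (letter σ i) (letter σ (i + 1))

/-- Major index: sum of the (1-based) descent places. -/
def maj (σ : CP ℓ n) : ℕ := ∑ i ∈ desSet σ, (i + 1)

/-- Number of descents. -/
def des (σ : CP ℓ n) : ℕ := (desSet σ).card

/-- `col σ = Σ_j j·#{i : ε_{x_i} = ζ^j}`. -/
def col (σ : CP ℓ n) : ℕ := ∑ i, (σ.2 i : ℕ)

/-- flag major index. -/
def fmaj (σ : CP ℓ n) : ℕ := ℓ * maj σ + col σ

/-- The set of fixed points (position fixed and color `ζ^0 = 1`). -/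
def fixSet (σ : CP ℓ n) : Finset (Fin n) :=
  univ.filter fun i => σ.1 i = i ∧ (σ.2 i : ℕ) = 0

def fix (σ : CP ℓ n) : ℕ := (fixSet σ).card

/-- Number of excedances `x_i > i`. -/
def exc (σ : CP ℓ n) : ℕ :=
  (univ.filter fun i : Fin n => (σ.2 i : ℕ) = 0 ∧ (i : ℕ) < (σ.1 i : ℕ)).card

lemma card_nonfix (σ : CP ℓ n) : ((fixSet σ)ᶜ).card = n - fix σ := by
  rw [Finset.card_compl, fix, Fintype.card_fin]

lemma card_vals (σ : CP ℓ n) : (((fixSet σ)ᶜ).image σ.1).card = n - fix σ := by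
  rw [Finset.card_image_of_injective _ σ.1.injective, card_nonfix]

/-- The bijection from nonfixed positions to the set of their values. -/
def derMid (σ : CP ℓ n) :
    {x // x ∈ ((fixSet σ)ᶜ : Finset (Fin n))} ≃ {x // x ∈ ((fixSet σ)ᶜ).image σ.1} where
  toFun p := ⟨σ.1 p.1, Finset.mem_image_of_mem _ p.2⟩
  invFun v := ⟨σ.1.symm v.1, by
    obtain ⟨p, hp, hpv⟩ := Finset.mem_image.mp v.2
    simpa [← hpv] using hp⟩
  left_inv p := by simp
  right_inv v := by simp

/-- The derangement part `Der σ`: delete the fixed points of the word of `σ`, replace each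
absolute value by its rank among the remaining values, and keep the colors. -/
def Der (σ : CP ℓ n) : CP ℓ (n - fix σ) :=
  let eP := ((fixSet σ)ᶜ).orderIsoOfFin (card_nonfix σ)
  let eV := (((fixSet σ)ᶜ).image σ.1).orderIsoOfFin (card_vals σ)
  (eP.toEquiv.trans ((derMid σ).trans eV.toEquiv.symm), fun i => σ.2 (eP i))

/-- `maf σ = maj (Der σ) + Σ_{j=1}^k (i_j − j)` over the (1-based) fixed points
`i_1 < ⋯ < i_k`; with 0-based fixed positions this is `Σ f − k(k−1)/2`. -/
def maf (σ : CP ℓ n) : ℕ := maj (Der σ) + ((∑ i ∈ fixSet σ, (i : ℕ)) - (fix σ).choose 2)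

/-- flag maf. -/
def fmaf (σ : CP ℓ n) : ℕ := ℓ * maf σ + col σ

end CP

/-- The q-integer `[k]_q = 1 + q + ⋯ + q^{k-1}`. -/
def qint {R : Type*} [CommSemiring R] (q : R) (k : ℕ) : R := ∑ i ∈ range k, q ^ i

open MvPolynomial in
/-- `g_{ℓ,n}(q,x) = Σ_{k=0}^n (x−1)(x−q^ℓ)⋯(x−q^{ℓ(k−1)}) · [(k+1)ℓ]_q ⋯ [nℓ]_q`,
as a polynomial in `q = X 0` and `x = X 1`. -/
noncomputable def gPoly (ℓ n : ℕ) : MvPolynomial (Fin 2) ℤ :=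
  ∑ k ∈ range (n + 1),
    (∏ i ∈ range k, (X 1 - (X 0 : MvPolynomial (Fin 2) ℤ) ^ (ℓ * i))) *
      ∏ j ∈ Icc (k + 1) n, qint (X 0 : MvPolynomial (Fin 2) ℤ) (j * ℓ)

/-! ### Gaussian binomial coefficients -/

section GaussianBinomial

variable {R : Type*} [CommSemiring R]

/-- The Gaussian binomial coefficient `[n choose k]_Q`, given by Pascal's rule so that it makes
sense for an element `Q` of any semiring. -/
def qbinom (Q : R) : ℕ → ℕ → R
  | _, 0 => 1
  | 0, _ + 1 => 0
  | n + 1, k + 1 => qbinom Q n k + Q ^ (k + 1) * qbinom Q n (k + 1)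

@[simp] lemma qbinom_zero_right (Q : R) (n : ℕ) : qbinom Q n 0 = 1 := by
  cases n <;> rfl

lemma qbinom_succ_succ (Q : R) (n k : ℕ) :
    qbinom Q (n + 1) (k + 1) = qbinom Q n k + Q ^ (k + 1) * qbinom Q n (k + 1) := rfl

lemma qbinom_eq_zero_of_lt (Q : R) : ∀ {n k : ℕ}, n < k → qbinom Q n k = 0
  | 0, _ + 1, _ => rfl
  | n + 1, k + 1, h => by
    rw [qbinom_succ_succ, qbinom_eq_zero_of_lt Q (by omega : n < k),
      qbinom_eq_zero_of_lt Q (by omega : n < k + 1), mul_zero, add_zero]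

@[simp] lemma qbinom_self (Q : R) : ∀ n : ℕ, qbinom Q n n = 1
  | 0 => rfl
  | n + 1 => by
    rw [qbinom_succ_succ, qbinom_self Q n, qbinom_eq_zero_of_lt Q n.lt_succ_self, mul_zero,
      add_zero]

lemma qbinom_add_succ_succ (Q : R) : ∀ m k : ℕ,
    qbinom Q (m + k + 1) (k + 1) = Q ^ m * qbinom Q (m + k) k + qbinom Q (m + k) (k + 1)
  | 0, k => by simp [qbinom_eq_zero_of_lt Q k.lt_succ_self]
  | m + 1, 0 => by
    calc qbinom Q (m + 1 + 1) 1
      _ = 1 + Q * (Q ^ m + qbinom Q m 1) := by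
        rw [qbinom_succ_succ, show m + 1 = m + 0 + 1 from rfl, qbinom_add_succ_succ Q m 0]
        simp
      _ = Q ^ (m + 1) * qbinom Q (m + 1) 0 + qbinom Q (m + 1) 1 := by
        simp only [qbinom_succ_succ, qbinom_zero_right]
        ring
  | m + 1, k + 1 => by
    have e : m + (k + 1) = m + 1 + k := by omega
    have h := qbinom_add_succ_succ Q m (k + 1)
    calc qbinom Q (m + 1 + k + 1 + 1) (k + 1 + 1)
      _ = qbinom Q (m + 1 + k + 1) (k + 1)
          + Q ^ (k + 2) * qbinom Q (m + (k + 1) + 1) (k + 1 + 1) := by rw [e]; rfl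
      _ = (Q ^ (m + 1) * qbinom Q (m + 1 + k) k + qbinom Q (m + 1 + k) (k + 1))
          + Q ^ (k + 2) * (Q ^ m * qbinom Q (m + 1 + k) (k + 1)
            + qbinom Q (m + 1 + k) (k + 1 + 1)) := by
        rw [qbinom_add_succ_succ Q (m + 1) k, h, e]
      _ = Q ^ (m + 1) * qbinom Q (m + 1 + k + 1) (k + 1)
          + qbinom Q (m + 1 + k + 1) (k + 1 + 1) := by
        simp only [qbinom_succ_succ]
        ring

lemma qbinom_mul_qbinom (Q : R) : ∀ k j i : ℕ,
    qbinom Q (k + j + i) k * qbinom Q (j + i) j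
      = qbinom Q (k + j + i) (k + j) * qbinom Q (k + j) k
  | 0, j, i => by simp
  | k + 1, 0, i => by simp
  | k + 1, j + 1, 0 => by simp
  | k + 1, j + 1, i + 1 => by
    have h₁ := qbinom_mul_qbinom Q k (j + 1) (i + 1)
    have h₂ := qbinom_mul_qbinom Q (k + 1) j (i + 1)
    have h₃ := qbinom_mul_qbinom Q (k + 1) (j + 1) i
    rw [show k + 1 + j = k + (j + 1) by omega] at h₂
    rw [show k + 1 + (j + 1) + i = k + (j + 1) + (i + 1) by omega,
      show j + 1 + i = j + (i + 1) by omega] at h₃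
    calc qbinom Q (k + 1 + (j + 1) + (i + 1)) (k + 1) * qbinom Q (j + 1 + (i + 1)) (j + 1)
      _ = qbinom Q (k + (j + 1) + (i + 1)) k * qbinom Q (j + 1 + (i + 1)) (j + 1)
          + Q ^ (k + 1) * (qbinom Q (k + (j + 1) + (i + 1)) (k + 1) * qbinom Q (j + (i + 1)) j)
          + Q ^ (k + j + 2) *
            (qbinom Q (k + (j + 1) + (i + 1)) (k + 1) * qbinom Q (j + (i + 1)) (j + 1)) := by
        rw [show k + 1 + (j + 1) + (i + 1) = k + (j + 1) + (i + 1) + 1 by omega,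
          show j + 1 + (i + 1) = j + (i + 1) + 1 by omega]
        simp only [qbinom_succ_succ Q _ k, qbinom_succ_succ Q _ j]
        ring
      _ = qbinom Q (k + 1 + (j + 1) + (i + 1)) (k + 1 + (j + 1))
          * qbinom Q (k + 1 + (j + 1)) (k + 1) := by
        rw [h₁, h₂, h₃, show k + 1 + (j + 1) + (i + 1) = k + (j + 1) + (i + 1) + 1 by omega,
          show k + 1 + (j + 1) = k + (j + 1) + 1 by omega]
        simp only [qbinom_succ_succ Q _ k, qbinom_succ_succ Q _ (k + (j + 1))]
        ring

lemma qint_add (q : R) (a b : ℕ) : qint q (a + b) = qint q a + q ^ a * qint q b := by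
  simp only [qint, sum_range_add, mul_sum, pow_add]

/-- The product `[ℓ]_q [2ℓ]_q ⋯ [nℓ]_q`, the `q`-analogue of the order of `G_{ℓ,n}`. -/
def qfac (q : R) (ℓ n : ℕ) : R := ∏ j ∈ range n, qint q ((j + 1) * ℓ)

lemma qfac_succ (q : R) (ℓ n : ℕ) : qfac q ℓ (n + 1) = qfac q ℓ n * qint q ((n + 1) * ℓ) :=
  prod_range_succ _ _

lemma qbinom_mul_qfac (q : R) (ℓ : ℕ) : ∀ m k : ℕ,
    qbinom (q ^ ℓ) (m + k) k * qfac q ℓ m = ∏ j ∈ range m, qint q ((k + j + 1) * ℓ)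
  | m, 0 => by simp [qfac]
  | 0, k + 1 => by simp [qfac]
  | m + 1, k + 1 => by
    have e : m + 1 + k = m + (k + 1) := by omega
    have hfirst : ∏ j ∈ range (m + 1), qint q ((k + j + 1) * ℓ)
        = (∏ j ∈ range m, qint q ((k + 1 + j + 1) * ℓ)) * qint q ((k + 1) * ℓ) := by
      rw [prod_range_succ']
      simp only [add_zero, add_right_comm k 1, ← add_assoc]
    have hq : qint q ((k + 1 + m + 1) * ℓ)
        = qint q ((k + 1) * ℓ) + (q ^ ℓ) ^ (k + 1) * qint q ((m + 1) * ℓ) := by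
      rw [← pow_mul, mul_comm ℓ, ← qint_add]
      congr 1
      ring
    calc qbinom (q ^ ℓ) (m + 1 + (k + 1)) (k + 1) * qfac q ℓ (m + 1)
      _ = qbinom (q ^ ℓ) (m + 1 + k) k * qfac q ℓ (m + 1)
          + (q ^ ℓ) ^ (k + 1) * qint q ((m + 1) * ℓ)
            * (qbinom (q ^ ℓ) (m + (k + 1)) (k + 1) * qfac q ℓ m) := by
        rw [← add_assoc, qbinom_succ_succ, e, qfac_succ]
        ring
      _ = (∏ j ∈ range m, qint q ((k + 1 + j + 1) * ℓ)) * qint q ((k + 1 + m + 1) * ℓ) := by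
        rw [qbinom_mul_qfac q ℓ (m + 1) k, qbinom_mul_qfac q ℓ m (k + 1), hfirst, hq]
        ring
      _ = ∏ j ∈ range (m + 1), qint q ((k + 1 + j + 1) * ℓ) := (prod_range_succ _ _).symm

lemma prod_Icc_qint (q : R) (ℓ m k : ℕ) :
    ∏ j ∈ Icc (k + 1) (m + k), qint q (j * ℓ) = qbinom (q ^ ℓ) (m + k) k * qfac q ℓ m := by
  rw [qbinom_mul_qfac, ← Ico_succ_right_eq_Icc, Order.succ_eq_add_one, prod_Ico_eq_prod_range,
    show m + k + 1 - (k + 1) = m by omega]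
  simp only [add_right_comm k _ 1]

lemma qfac_succ' (q : R) (ℓ n : ℕ) :
    qfac q ℓ (n + 1) = qint q ℓ * qbinom (q ^ ℓ) (n + 1) 1 * qfac q ℓ n := by
  rw [mul_assoc, qbinom_mul_qfac, qfac, prod_range_succ', mul_comm]
  simp only [zero_add, one_mul, add_comm 1]

lemma eq_sum_qbinom_of_recurrence {Q x : R} {A : ℕ → ℕ → R}
    (hA : ∀ n j, j ≤ n → A (n + 1) j = A (n + 1) (j + 1) + x * Q ^ j * A n j) (r j : ℕ) :
    A (j + r) j = ∑ k ∈ range (r + 1),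
      x ^ k * Q ^ (j * k) * qbinom Q r k * A (j + r - k) (j + r - k) := by
  induction r generalizing j with
  | zero => simp
  | succ r ih =>
    have hdiag : A (j + r + 1) (j + 1) = ∑ k ∈ range (r + 1),
          x ^ (k + 1) * Q ^ ((j + 1) * (k + 1)) * qbinom Q r (k + 1) * A (j + r - k) (j + r - k)
        + A (j + r + 1) (j + r + 1) := by
      rw [add_right_comm j r 1, ih (j + 1), sum_range_succ',
        sum_range_succ _ r, qbinom_eq_zero_of_lt Q r.lt_succ_self]
      simp [add_right_comm j 1 r]
    rw [← add_assoc, hA _ _ (Nat.le_add_right j r), hdiag, ih j, sum_range_succ' _ (r + 1)]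
    simp only [qbinom_zero_right, mul_zero, pow_zero, mul_one, one_mul, Nat.sub_zero,
      Nat.add_sub_add_right]
    rw [add_right_comm, mul_sum, ← sum_add_distrib]
    congr 1
    refine sum_congr rfl fun k _ => ?_
    rw [qbinom_succ_succ]
    ring

end GaussianBinomial

section CauchyTransform

variable {R : Type*} [CommRing R]

/-- Cauchy's form of the `q`-binomial theorem. -/
lemma sum_qbinom_mul_prod_sub (Q x : R) (s : ℕ) :
    ∑ k ∈ range (s + 1), qbinom Q s k * ∏ i ∈ range k, (x - Q ^ i) = x ^ s := by
  induction s with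
  | zero => simp
  | succ s ih =>
    have hshift : ∑ k ∈ range (s + 1),
          Q ^ (k + 1) * qbinom Q s (k + 1) * ∏ i ∈ range (k + 1), (x - Q ^ i) + 1
        = ∑ k ∈ range (s + 1), Q ^ k * qbinom Q s k * ∏ i ∈ range k, (x - Q ^ i) := by
      have h := sum_range_succ' (fun k => Q ^ k * qbinom Q s k * ∏ i ∈ range k, (x - Q ^ i)) (s + 1)
      rw [sum_range_succ, qbinom_eq_zero_of_lt Q s.lt_succ_self] at h
      simpa using h.symm
    rw [sum_range_succ']
    simp only [qbinom_succ_succ, add_mul, sum_add_distrib, qbinom_zero_right, prod_range_zero,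
      mul_one]
    rw [add_assoc, hshift, ← sum_add_distrib, pow_succ, ← ih, sum_mul]
    refine sum_congr rfl fun k _ => ?_
    rw [prod_range_succ]
    ring

lemma sum_prod_sub_mul_sum_qbinom (Q x : R) (D : ℕ → R) (n : ℕ) :
    ∑ k ∈ range (n + 1), (∏ i ∈ range k, (x - Q ^ i)) *
        (qbinom Q n k * ∑ j ∈ range (n - k + 1), qbinom Q (n - k) j * D (n - k - j))
      = ∑ s ∈ range (n + 1), x ^ s * qbinom Q n s * D (n - s) := by
  have hterm : ∀ k ∈ range (n + 1), (∏ i ∈ range k, (x - Q ^ i)) *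
        (qbinom Q n k * ∑ j ∈ range (n - k + 1), qbinom Q (n - k) j * D (n - k - j))
      = ∑ j ∈ range (n + 1 - k), (∏ i ∈ range k, (x - Q ^ i)) *
          (qbinom Q n (k + j) * qbinom Q (k + j) k * D (n - (k + j))) := by
    intro k hk
    rw [mem_range] at hk
    rw [mul_sum, mul_sum, show n + 1 - k = n - k + 1 by omega]
    refine sum_congr rfl fun j hj => ?_
    rw [mem_range] at hj
    obtain ⟨i, rfl⟩ : ∃ i, n = k + j + i := ⟨n - (k + j), by omega⟩
    rw [show k + j + i - k = j + i by omega, ← qbinom_mul_qbinom, Nat.add_sub_cancel_left,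
      Nat.add_sub_cancel_left, mul_assoc]
  rw [sum_congr rfl hterm, ← sum_range_diag_flip (n + 1) (fun k j => (∏ i ∈ range k, (x - Q ^ i)) *
    (qbinom Q n (k + j) * qbinom Q (k + j) k * D (n - (k + j))))]
  refine sum_congr rfl fun s _ => ?_
  rw [← sum_qbinom_mul_prod_sub Q x s, sum_mul, sum_mul]
  refine sum_congr rfl fun k hk => ?_
  rw [Nat.add_sub_cancel' (Nat.lt_succ_iff.mp (mem_range.mp hk))]
  ring

end CauchyTransform
/-! ### The shuffle theorem of Garsia and Gessel -/

section Shuffle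

variable {α : Type*} [LinearOrder α]

/-- The shuffles of `k` copies of the letter `v` into the word `L`: the words with `k` letters `v`
that become `L` when these are deleted. There are none if `v` occurs in `L`. -/
def shuffles (v : α) (k : ℕ) (L : List α) : Finset (List α) :=
  {s ∈ (List.replicate k v ++ L).permutations.toFinset | s.filter (· ≠ v) = L}

lemma perm_of_mem_shuffles {v : α} {k : ℕ} {L s : List α} (hs : s ∈ shuffles v k L) :
    s.Perm (List.replicate k v ++ L) :=
  List.mem_permutations.mp (List.mem_toFinset.mp (mem_filter.mp hs).1)

lemma mem_shuffles {v : α} {k : ℕ} {L s : List α} :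
    s ∈ shuffles v k L ↔ s.length = L.length + k ∧ s.filter (· ≠ v) = L := by
  constructor
  · intro hs
    refine ⟨?_, (mem_filter.mp hs).2⟩
    rw [(perm_of_mem_shuffles hs).length_eq, List.length_append, List.length_replicate, add_comm]
  · rintro ⟨hlen, rfl⟩
    have hperm := List.filter_append_perm (· = v) s
    have hv : s.filter (· = v) = List.replicate k v := by
      have hlen' := hperm.length_eq
      rw [List.length_append, hlen, add_comm] at hlen'
      exact List.eq_replicate_iff.mpr ⟨by simpa using hlen', by simp⟩
    rw [hv] at hperm
    rw [shuffles, mem_filter, List.mem_toFinset, List.mem_permutations]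
    exact ⟨by simpa using hperm.symm, rfl⟩

lemma filter_ne_eq_self {v : α} {L : List α} (hL : v ∉ L) : L.filter (· ≠ v) = L :=
  List.filter_eq_self.mpr fun a ha => by simpa using ne_of_mem_of_not_mem ha hL

lemma shuffles_zero {v : α} {L : List α} (hL : v ∉ L) : shuffles v 0 L = {L} := by
  ext s
  rw [mem_shuffles, mem_singleton]
  constructor
  · rintro ⟨hlen, rfl⟩
    exact (List.filter_sublist.eq_of_length hlen.symm).symm
  · rintro rfl
    exact ⟨rfl, filter_ne_eq_self hL⟩

lemma shuffles_nil (v : α) (k : ℕ) : shuffles v k [] = {List.replicate k v} := by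
  ext s
  simp [mem_shuffles, List.eq_replicate_iff]

lemma shuffles_succ_cons {v a : α} (ha : a ≠ v) (k : ℕ) (L : List α) :
    shuffles v (k + 1) (a :: L) = (shuffles v k (a :: L)).image (List.cons v) ∪
      (shuffles v (k + 1) L).image (List.cons a) := by
  ext s
  rw [mem_union, mem_image, mem_image, mem_shuffles]
  cases s with
  | nil => simp
  | cons b s =>
    by_cases hb : b = v
    · subst hb
      simp [mem_shuffles, ha, ← add_assoc]
    · simp only [List.length_cons, List.filter_cons_of_pos, hb, ne_eq, not_false_eq_true,
        decide_true, List.cons.injEq, mem_shuffles]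
      grind

lemma sum_shuffles_succ_cons {M : Type*} [AddCommMonoid M] {v a : α} (ha : a ≠ v) (k : ℕ)
    (L : List α) (F : List α → M) :
    ∑ s ∈ shuffles v (k + 1) (a :: L), F s
      = ∑ s ∈ shuffles v k (a :: L), F (v :: s) + ∑ s ∈ shuffles v (k + 1) L, F (a :: s) := by
  rw [shuffles_succ_cons ha, sum_union, sum_image List.cons_injective.injOn,
    sum_image List.cons_injective.injOn]
  rw [disjoint_left]
  simp only [mem_image]
  rintro _ ⟨s, -, rfl⟩ ⟨t, -, h⟩
  exact ha (List.cons.inj h).1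

lemma sum_shuffles_one {M : Type*} [AddCommMonoid M] {v : α} {L : List α} (hL : v ∉ L)
    (F : List α → M) :
    ∑ s ∈ shuffles v 1 L, F s = ∑ p ∈ range (L.length + 1), F (L.insertIdx p v) := by
  induction L generalizing F with
  | nil => simp [shuffles_nil]
  | cons a L ih =>
    obtain ⟨ha, hL'⟩ := List.ne_and_not_mem_of_not_mem_cons hL
    rw [sum_shuffles_succ_cons ha.symm, shuffles_zero hL, sum_singleton, ih hL',
      List.length_cons, sum_range_succ' _ (L.length + 1), add_comm]
    simp

lemma sum_shuffles_reverse {M : Type*} [AddCommMonoid M] (v : α) (k : ℕ) (L : List α)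
    (F : List α → M) :
    ∑ s ∈ shuffles v k L, F s.reverse = ∑ s ∈ shuffles v k L.reverse, F s := by
  refine sum_nbij' List.reverse List.reverse ?_ ?_ ?_ ?_ fun _ _ => rfl <;>
    simp +contextual [mem_shuffles, List.filter_reverse]

/-- The major index of the word that reads `L` backwards and is then followed by the letter `u`;
`u = ⊤` stands for no further letter. Reading backwards puts the last letter of the word, on
which the inductions act, at the head of the list. -/
def revMaj (u : WithTop α) : List α → ℕ
  | [] => 0
  | a :: L => (if u < a then L.length + 1 else 0) + revMaj a L

/-- The major index of a word: the sum of the (1-based) positions `i` with `wᵢ > wᵢ₊₁`. -/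
def wordMaj (w : List α) : ℕ := revMaj ⊤ w.reverse

lemma revMaj_replicate (u : WithTop α) (k : ℕ) (v : α) :
    revMaj u (List.replicate k v) = if u < v then k else 0 := by
  induction k generalizing u with
  | zero => simp [revMaj]
  | succ k ih => simp [List.replicate_succ, revMaj, ih]

/-- The step of the shuffle theorem: the exponents are those of the shuffles ending in `v`, of the
shuffles ending in `a`, and of the sum. The order of `u`, `v`, `a` decides which of the two Pascal
rules applies. -/
lemma qbinom_add_succ_of_descents {R : Type*} [CommSemiring R] (Q : R) (u : WithTop α) {v a : α}
    (h : a ≠ v) (m k : ℕ) :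
    Q ^ ((if u < v then m + k + 1 else 0) + if v < a then m else 0) * qbinom Q (m + k) k
        + Q ^ ((if u < a then m + k + 1 else 0) + if a < v then k + 1 else 0)
          * qbinom Q (m + k) (k + 1)
      = Q ^ ((if u < a then m else 0) + if u < v then k + 1 else 0)
        * qbinom Q (m + k + 1) (k + 1) := by
  rcases lt_or_gt_of_ne h with hav | hva
  · have huv : u < a → u < v := fun hu => hu.trans (WithTop.coe_lt_coe.mpr hav)
    by_cases hua : u < a
    · simp only [hua, huv hua, hav, hav.not_gt, if_true, if_false, qbinom_succ_succ]
      ring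
    · by_cases huv' : u < v <;> simp only [hua, huv', hav, hav.not_gt, if_true, if_false]
      · rw [qbinom_add_succ_succ]
        ring
      · rw [qbinom_succ_succ]
        ring
  · have hua : u < v → u < a := fun hu => hu.trans (WithTop.coe_lt_coe.mpr hva)
    by_cases huv : u < v
    · simp only [huv, hua huv, hva, hva.not_gt, if_true, if_false, qbinom_add_succ_succ]
      ring
    · by_cases hua' : u < a <;> simp only [huv, hua', hva, hva.not_gt, if_true, if_false]
      · rw [qbinom_succ_succ]
        ring
      · rw [qbinom_add_succ_succ]
        ring

lemma sum_shuffles_pow_revMaj_cons {R : Type*} [CommSemiring R] (Q : R) (v : α) (k : ℕ)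
    (L : List α) (u : WithTop α) (a : α) :
    ∑ s ∈ shuffles v k L, Q ^ revMaj u (a :: s)
      = Q ^ (if u < a then L.length + k + 1 else 0) * ∑ s ∈ shuffles v k L, Q ^ revMaj a s := by
  rw [mul_sum]
  refine sum_congr rfl fun s hs => ?_
  rw [revMaj, pow_add, (mem_shuffles.mp hs).1]

lemma sum_shuffles_pow_revMaj {R : Type*} [CommSemiring R] (Q : R) {v : α} {L : List α}
    (hL : v ∉ L) (k : ℕ) (u : WithTop α) :
    ∑ s ∈ shuffles v k L, Q ^ revMaj u s
      = Q ^ (revMaj u L + if u < v then k else 0) * qbinom Q (L.length + k) k := by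
  induction L generalizing k u with
  | nil => simp [shuffles_nil, revMaj_replicate, revMaj]
  | cons a L ihL =>
    obtain ⟨ha, hL'⟩ := List.ne_and_not_mem_of_not_mem_cons hL
    induction k generalizing u with
    | zero => simp [shuffles_zero hL]
    | succ k ihk =>
      have hlen : L.length + (k + 1) = L.length + 1 + k := by omega
      have hstep := qbinom_add_succ_of_descents Q u ha.symm (L.length + 1) k
      rw [sum_shuffles_succ_cons ha.symm, sum_shuffles_pow_revMaj_cons,
        sum_shuffles_pow_revMaj_cons, ihk, ihL hL', List.length_cons, hlen, ← add_assoc]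
      simp only [revMaj, WithTop.coe_lt_coe, lt_irrefl, if_false, pow_add, pow_zero,
        mul_one] at hstep ⊢
      convert congrArg (Q ^ revMaj (a : WithTop α) L * ·) hstep using 1 <;> ring

theorem sum_shuffles_pow_wordMaj {R : Type*} [CommSemiring R] (Q : R) {v : α} {L : List α}
    (hL : v ∉ L) (k : ℕ) :
    ∑ s ∈ shuffles v k L, Q ^ wordMaj s = Q ^ wordMaj L * qbinom Q (L.length + k) k := by
  have h := sum_shuffles_reverse v k L fun s => Q ^ revMaj ⊤ s
  simp only [wordMaj]
  rw [h, sum_shuffles_pow_revMaj Q (L := L.reverse) (by simpa using hL)]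
  simp

lemma revMaj_reverse_ofFn {n : ℕ} (g : Fin (n + 1) → α) (u : WithTop α) :
    revMaj u (List.ofFn g).reverse = (if u < g (Fin.last n) then n + 1 else 0)
      + ∑ i : Fin n, if g i.succ < g i.castSucc then (i : ℕ) + 1 else 0 := by
  induction n generalizing u with
  | zero => simp [revMaj]
  | succ n ih =>
    rw [List.ofFn_succ', List.concat_eq_append, List.reverse_concat, revMaj, ih,
      Fin.sum_univ_castSucc]
    simp only [List.length_reverse, List.length_ofFn, WithTop.coe_lt_coe, Fin.succ_last,
      Fin.val_castSucc, Fin.val_last, Fin.succ_castSucc]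
    ring

lemma wordMaj_ofFn {n : ℕ} (g : Fin (n + 1) → α) :
    wordMaj (List.ofFn g) = ∑ i : Fin n, if g i.succ < g i.castSucc then (i : ℕ) + 1 else 0 := by
  simp only [wordMaj, revMaj_reverse_ofFn, not_top_lt, if_false, zero_add]

namespace CP

variable {ℓ n : ℕ}

lemma letter_coe (σ : CP ℓ n) (i : Fin n) : letter σ i = ((σ.2 i : ℕ), (σ.1 i : ℕ)) := by
  simp [letter]

lemma maj_eq_wordMaj (σ : CP ℓ n) (g : Fin n → α)
    (hg : ∀ i j : Fin n, (j : ℕ) = i + 1 →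
      (g j < g i ↔ gtLetter ((σ.2 i : ℕ), (σ.1 i : ℕ)) ((σ.2 j : ℕ), (σ.1 j : ℕ)))) :
    maj σ = wordMaj (List.ofFn g) := by
  cases n with
  | zero => simp [maj, desSet, wordMaj, revMaj]
  | succ n =>
    rw [wordMaj_ofFn, maj, desSet, sum_filter, Nat.add_sub_cancel, ← Fin.sum_univ_eq_sum_range
      fun i => if gtLetter (letter σ i) (letter σ (i + 1)) then i + 1 else 0]
    refine sum_congr rfl fun i _ => if_congr ?_ rfl rfl
    rw [hg i.castSucc i.succ (by simp), ← letter_coe, ← letter_coe, Fin.val_castSucc, Fin.val_succ]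

end CP

end Shuffle

/-! ### Inserting a letter into a colored permutation -/

lemma ofFn_eq_insertIdx_succAbove {α : Type*} {n : ℕ} (p : Fin (n + 1)) (g : Fin (n + 1) → α) :
    List.ofFn g = (List.ofFn fun i => g (p.succAbove i)).insertIdx p (g p) := by
  induction n with
  | zero => simp [Fin.fin_one_eq_zero p]
  | succ n ih =>
    induction p using Fin.cases with
    | zero => rw [List.ofFn_succ]; rfl
    | succ p =>
      rw [List.ofFn_succ, ih p fun i => g i.succ,
        List.ofFn_succ (f := fun i => g (p.succ.succAbove i))]
      simp

namespace CP

section Insert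

variable {ℓ n : ℕ}

/-- Insert into the colored permutation `τ`, at position `p`, the letter of absolute value `v` and
color `c`; positions `≥ p` and values `≥ v` of `τ` are shifted up by one. -/
def ins (p v : Fin (n + 1)) (c : Fin ℓ) (τ : CP ℓ n) : CP ℓ (n + 1) :=
  (((finSuccEquiv' p).trans (Equiv.optionCongr τ.1)).trans (finSuccEquiv' v).symm,
    Fin.insertNth (α := fun _ => Fin ℓ) p c τ.2)

variable (p v : Fin (n + 1)) (c : Fin ℓ) (τ : CP ℓ n)

@[simp] lemma ins_fst_same : (ins p v c τ).1 p = v := by simp [ins]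

@[simp] lemma ins_snd_same : (ins p v c τ).2 p = c := by simp [ins]

@[simp] lemma ins_fst_succAbove (i : Fin n) :
    (ins p v c τ).1 (p.succAbove i) = v.succAbove (τ.1 i) := by simp [ins]

@[simp] lemma ins_snd_succAbove (i : Fin n) : (ins p v c τ).2 (p.succAbove i) = τ.2 i := by
  simp [ins]

lemma ins_injective : Function.Injective (ins p v c) := by
  refine fun τ τ' h => Prod.ext (Equiv.ext fun i => ?_) (funext fun i => ?_)
  · simpa using congrArg (fun σ : CP ℓ (n + 1) => σ.1 (p.succAbove i)) h
  · simpa using congrArg (fun σ : CP ℓ (n + 1) => σ.2 (p.succAbove i)) h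

lemma exists_ins_eq (σ : CP ℓ (n + 1)) : ∃ τ, ins p (σ.1 p) (σ.2 p) τ = σ := by
  let e : Equiv.Perm (Option (Fin n)) :=
    ((finSuccEquiv' p).symm.trans σ.1).trans (finSuccEquiv' (σ.1 p))
  have he : Equiv.optionCongr (Equiv.removeNone e) = e := by
    have hnone : e none = none := by simp [e]
    rw [map_equiv_removeNone, hnone, Equiv.swap_self]
    rfl
  refine ⟨(Equiv.removeNone e, p.removeNth σ.2), Prod.ext (Equiv.ext fun i => ?_) ?_⟩
  · simp [ins, he, e]
  · exact Fin.insertNth_self_removeNth p σ.2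

lemma sum_ins {M : Type*} [AddCommMonoid M] (P : CP ℓ (n + 1) → Prop) [DecidablePred P]
    (hP : ∀ σ, P σ → σ.1 p = v ∧ σ.2 p = c) (F : CP ℓ (n + 1) → M) :
    ∑ σ with P σ, F σ = ∑ τ with P (ins p v c τ), F (ins p v c τ) := by
  symm
  refine sum_nbij (ins p v c) ?_ (ins_injective p v c).injOn ?_ fun _ _ => rfl
  · simp
  · intro σ hσ
    rw [mem_coe, mem_filter_univ] at hσ
    obtain ⟨rfl, rfl⟩ := hP σ hσ
    obtain ⟨τ, hτ⟩ := exists_ins_eq p σ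
    exact ⟨τ, by rwa [mem_coe, mem_filter_univ, hτ], hτ⟩

lemma col_ins : col (ins p v c τ) = c + col τ := by
  simp [col, Fin.sum_univ_succAbove _ p]

lemma sum_eq_sum_ins_last {M : Type*} [AddCommMonoid M] (F : CP ℓ (n + 1) → M) :
    ∑ σ, F σ = ∑ c : Fin ℓ, ∑ τ : CP ℓ n, ∑ p : Fin (n + 1), F (ins p (Fin.last n) c τ) := by
  have hfiber : ∀ (p : Fin (n + 1)) (c : Fin ℓ),
      ∑ σ with σ.1.symm (Fin.last n) = p ∧ σ.2 p = c, F σ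
        = ∑ τ : CP ℓ n, F (ins p (Fin.last n) c τ) := by
    intro p c
    rw [sum_ins p (Fin.last n) c _ fun σ hσ => ⟨by simp [← hσ.1], hσ.2⟩]
    simp [Equiv.symm_apply_eq]
  calc ∑ σ, F σ
    _ = ∑ p : Fin (n + 1), ∑ c : Fin ℓ,
        ∑ σ with σ.1.symm (Fin.last n) = p ∧ σ.2 p = c, F σ := by
      rw [← sum_fiberwise univ fun σ : CP ℓ (n + 1) => σ.1.symm (Fin.last n)]
      refine sum_congr rfl fun p _ => ?_
      rw [← sum_fiberwise _ fun σ : CP ℓ (n + 1) => σ.2 p]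
      simp only [filter_filter]
    _ = ∑ c : Fin ℓ, ∑ τ : CP ℓ n, ∑ p : Fin (n + 1), F (ins p (Fin.last n) c τ) := by
      simp only [hfiber]
      rw [sum_comm]
      exact sum_congr rfl fun c _ => sum_comm

/-- The word of `σ`, the letters being ordered by `CP.gtLetter`. -/
def letters (σ : CP ℓ n) : List (ℕᵒᵈ ×ₗ ℕ) :=
  List.ofFn fun i => toLex (OrderDual.toDual (σ.2 i : ℕ), (σ.1 i : ℕ))

lemma maj_eq_wordMaj_letters (σ : CP ℓ n) : maj σ = wordMaj (letters σ) := by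
  refine maj_eq_wordMaj σ _ fun i j _ => ?_
  rw [Prod.Lex.toLex_lt_toLex, OrderDual.toDual_lt_toDual, OrderDual.toDual_inj, gtLetter, eq_comm]

lemma letters_ins_last :
    letters (ins p (Fin.last n) c τ)
      = (letters τ).insertIdx p (toLex (OrderDual.toDual (c : ℕ), n)) := by
  rw [letters, ofFn_eq_insertIdx_succAbove p]
  simp [letters]

lemma sum_pow_fmaj_ins_last {R : Type*} [CommSemiring R] (q : R) :
    ∑ p : Fin (n + 1), q ^ fmaj (ins p (Fin.last n) c τ)
      = q ^ (c : ℕ) * qbinom (q ^ ℓ) (n + 1) 1 * q ^ fmaj τ := by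
  let v : ℕᵒᵈ ×ₗ ℕ := toLex (OrderDual.toDual (c : ℕ), n)
  have hv : v ∉ letters τ := by
    simp [letters, List.mem_ofFn, v, Prod.ext_iff, (τ.1 _).2.ne]
  have hlen : (letters τ).length = n := List.length_ofFn
  have hshuffle := sum_shuffles_pow_wordMaj (q ^ ℓ) hv 1
  rw [sum_shuffles_one hv, hlen,
    ← Fin.sum_univ_eq_sum_range fun p => (q ^ ℓ) ^ wordMaj ((letters τ).insertIdx p v)] at hshuffle
  simp only [fmaj, col_ins, maj_eq_wordMaj_letters, letters_ins_last, pow_add, pow_mul]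
  rw [← sum_mul, hshuffle]
  ring

lemma sum_pow_fmaj {R : Type*} [CommSemiring R] (q : R) (ℓ n : ℕ) :
    ∑ σ : CP ℓ n, q ^ fmaj σ = qfac q ℓ n := by
  induction n with
  | zero => simp [qfac, fmaj, maj, desSet, col]
  | succ n ih =>
    rw [sum_eq_sum_ins_last, qfac_succ', ← ih, qint, ← Fin.sum_univ_eq_sum_range, sum_mul,
      sum_mul]
    simp only [sum_pow_fmaj_ins_last, mul_sum]

end Insert

end CP

/-! ### Colored permutations as shuffles of their derangement parts -/

namespace CP

variable {ℓ n : ℕ}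

/-- `i` is a fixed point of `σ`: its value is `i` and its color is trivial. -/
def IsFix (σ : CP ℓ n) (i : Fin n) : Prop := σ.1 i = i ∧ (σ.2 i : ℕ) = 0

instance (σ : CP ℓ n) : DecidablePred (IsFix σ) := fun _ => by unfold IsFix; infer_instance

/-- `σ` is a colored derangement, i.e. has no fixed point. -/
abbrev IsDerangement (σ : CP ℓ n) : Prop := ∀ i, ¬ IsFix σ i

lemma mem_fixSet {σ : CP ℓ n} {i : Fin n} : i ∈ fixSet σ ↔ IsFix σ i := by
  simp [fixSet, IsFix]

lemma isFix_apply_iff {σ : CP ℓ n} {i : Fin n} : IsFix σ (σ.1 i) ↔ IsFix σ i := by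
  simp only [IsFix, EmbeddingLike.apply_eq_iff_eq]
  exact and_congr_right fun h => by rw [h]

/-- The number of non-fixed letters of absolute value less than `v`; as the non-fixed values are
the non-fixed positions, these positions are counted. -/
def rank (σ : CP ℓ n) (v : Fin n) : ℕ := #{j | ¬ IsFix σ j ∧ j < v}

lemma rank_lt_rank {σ : CP ℓ n} {v w : Fin n} (hv : ¬ IsFix σ v) (hvw : v < w) :
    rank σ v < rank σ w := by
  refine card_lt_card ((ssubset_iff_of_subset fun j => ?_).mpr ⟨v, by simp [hv, hvw], by simp⟩)
  rw [mem_filter_univ, mem_filter_univ]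
  exact And.imp_right (·.trans hvw)

lemma rank_lt_rank_iff {σ : CP ℓ n} {v w : Fin n} (hv : ¬ IsFix σ v) (hw : ¬ IsFix σ w) :
    rank σ v < rank σ w ↔ v < w := by
  refine ⟨fun h => ?_, rank_lt_rank hv⟩
  by_contra! hle
  rcases hle.eq_or_lt with rfl | hlt
  · exact lt_irrefl _ h
  · exact h.asymm (rank_lt_rank hw hlt)

/-- The alphabet of keys: a sign, the color (smaller colors being greater) and a value. -/
abbrev Key := SignType ×ₗ ℕᵒᵈ ×ₗ ℕ

-- The default instance for `Lex` is not the one of the linear order, which `shuffles` uses.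
instance : DecidableEq Key := LinearOrder.toDecidableEq

/-- The key that represents a fixed point. -/
def fixKey : Key := toLex (0, toLex (OrderDual.toDual 0, 0))

/-- The key of a non-fixed letter `ζ^c · σ(i)`: its sign is positive for excedances `σ(i) > i`
(of trivial color) and negative otherwise, and its value is the reduced one. -/
def derKey (σ : CP ℓ n) (i : Fin n) : Key :=
  toLex (if (σ.2 i : ℕ) = 0 ∧ i < σ.1 i then 1 else -1,
    toLex (OrderDual.toDual (σ.2 i : ℕ), rank σ (σ.1 i)))

/-- Wachs's relabelling of the letters of `σ`: excedances are greater than fixed points, which are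
greater than the other letters, and all fixed points become the same letter. -/
def key (σ : CP ℓ n) (i : Fin n) : Key := if IsFix σ i then fixKey else derKey σ i

lemma derKey_ne_fixKey (σ : CP ℓ n) (i : Fin n) : derKey σ i ≠ fixKey := by
  intro h
  have hsign := congrArg (fun k : Key => (ofLex k).1) h
  by_cases hi : (σ.2 i : ℕ) = 0 ∧ i < σ.1 i <;> simp [derKey, fixKey, hi] at hsign

lemma key_eq_fixKey_iff {σ : CP ℓ n} {i : Fin n} : key σ i = fixKey ↔ IsFix σ i := by
  by_cases hi : IsFix σ i <;> simp [key, hi, derKey_ne_fixKey]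

lemma derKey_lt_fixKey_iff {σ : CP ℓ n} {i : Fin n} :
    derKey σ i < fixKey ↔ ¬ ((σ.2 i : ℕ) = 0 ∧ i < σ.1 i) := by
  by_cases hi : (σ.2 i : ℕ) = 0 ∧ i < σ.1 i <;>
    simp [derKey, fixKey, Prod.Lex.toLex_lt_toLex, hi]

lemma fixKey_lt_derKey_iff {σ : CP ℓ n} {i : Fin n} :
    fixKey < derKey σ i ↔ (σ.2 i : ℕ) = 0 ∧ i < σ.1 i := by
  rw [← not_iff_not, ← derKey_lt_fixKey_iff, not_lt, le_iff_lt_or_eq,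
    or_iff_left (derKey_ne_fixKey σ i)]

lemma derKey_lt_derKey_iff {σ : CP ℓ n} {i j : Fin n} (hi : ¬ IsFix σ i) (hj : ¬ IsFix σ j)
    (hij : (j : ℕ) = i + 1) :
    derKey σ j < derKey σ i ↔ gtLetter ((σ.2 i : ℕ), (σ.1 i : ℕ)) ((σ.2 j : ℕ), (σ.1 j : ℕ)) := by
  have hrank := rank_lt_rank_iff (mt isFix_apply_iff.mp hj) (mt isFix_apply_iff.mp hi)
  have hlt : (-1 : SignType) < 1 := by decide
  rw [IsFix, Fin.ext_iff] at hi hj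
  simp only [derKey, Prod.Lex.toLex_lt_toLex, OrderDual.toDual_lt_toDual, OrderDual.toDual_inj,
    hrank, gtLetter, Fin.lt_def]
  split_ifs <;> simp [hlt, hlt.not_gt] <;> omega

lemma key_lt_key_iff {σ : CP ℓ n} {i j : Fin n} (hij : (j : ℕ) = i + 1) :
    key σ j < key σ i ↔ gtLetter ((σ.2 i : ℕ), (σ.1 i : ℕ)) ((σ.2 j : ℕ), (σ.1 j : ℕ)) := by
  have hne : (σ.1 i : ℕ) ≠ σ.1 j := Fin.val_ne_of_ne (σ.1.injective.ne (by rintro rfl; omega))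
  by_cases hi : IsFix σ i <;> by_cases hj : IsFix σ j
  · simp only [key, hi, hj, if_true, lt_irrefl, gtLetter, false_iff]
    rw [IsFix, Fin.ext_iff] at hi hj
    omega
  · simp only [key, hi, hj, if_true, if_false, derKey_lt_fixKey_iff, gtLetter]
    rw [IsFix, Fin.ext_iff] at hi hj
    rw [Fin.lt_def]
    omega
  · simp only [key, hi, hj, if_true, if_false, fixKey_lt_derKey_iff, gtLetter]
    rw [IsFix, Fin.ext_iff] at hi hj
    rw [Fin.lt_def]
    omega
  · simp only [key, hi, hj, if_false]
    exact derKey_lt_derKey_iff hi hj hij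

/-- The word of keys of `σ`. -/
def word (σ : CP ℓ n) : List Key := List.ofFn (key σ)

lemma maj_eq_wordMaj_word (σ : CP ℓ n) : maj σ = wordMaj (word σ) :=
  maj_eq_wordMaj σ (key σ) fun _ _ => key_lt_key_iff

end CP

lemma insertIdx_append_length {α : Type*} (a b : List α) (v : α) :
    (a ++ b).insertIdx a.length v = a ++ v :: b := by
  induction a with
  | nil => rfl
  | cons x a ih => simpa using ih

namespace CP

section Word

variable {ℓ n m : ℕ}

lemma fixKey_notMem_word {δ : CP ℓ n} (hδ : IsDerangement δ) : fixKey ∉ word δ := by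
  simpa [word, List.mem_ofFn, key_eq_fixKey_iff] using hδ

lemma fix_le (σ : CP ℓ n) : fix σ ≤ n := by
  simpa [fix] using card_le_univ (fixSet σ)

lemma fix_eq_zero_iff {σ : CP ℓ n} : fix σ = 0 ↔ IsDerangement σ := by
  simp [fix, eq_empty_iff_forall_notMem, mem_fixSet]

lemma rank_eq_of_isDerangement {δ : CP ℓ n} (hδ : IsDerangement δ) (v : Fin n) :
    rank δ v = v := by
  have hall : ({j | ¬ IsFix δ j ∧ j < v} : Finset (Fin n)) = Iio v := by
    ext j
    simp [hδ j]
  rw [rank, hall, Fin.card_Iio]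

lemma word_injOn_derangements : Set.InjOn word {δ : CP ℓ n | IsDerangement δ} := by
  intro δ hδ δ' hδ' h
  have hkey (i : Fin n) : derKey δ i = derKey δ' i := by
    simpa [key, hδ i, hδ' i] using congrFun (List.ofFn_injective h) i
  refine Prod.ext (Equiv.ext fun i => ?_) (funext fun i => ?_)
  · have hrank := congrArg (fun k : Key => (ofLex (ofLex k).2).2) (hkey i)
    simpa [derKey, rank_eq_of_isDerangement hδ, rank_eq_of_isDerangement hδ', Fin.val_inj]
      using hrank
  · have hcolor := congrArg (fun k : Key => OrderDual.ofDual (ofLex (ofLex k).2).1) (hkey i)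
    simpa [derKey, Fin.val_inj] using hcolor

/-- `δ` is obtained from `σ` by deleting fixed points and standardizing: `e` embeds the positions
and the values of `δ` as those of the letters of `σ` that are kept. -/
structure IsReduction (e : Fin m ↪o Fin n) (σ : CP ℓ n) (δ : CP ℓ m) : Prop where
  fst_apply (i : Fin m) : σ.1 (e i) = e (δ.1 i)
  snd_apply (i : Fin m) : σ.2 (e i) = δ.2 i
  isFix_of_notMem_range (j : Fin n) : j ∉ Set.range e → IsFix σ j

namespace IsReduction

variable {e : Fin m ↪o Fin n} {σ : CP ℓ n} {δ : CP ℓ m}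

lemma isFix_apply_iff (h : IsReduction e σ δ) (i : Fin m) : IsFix σ (e i) ↔ IsFix δ i := by
  rw [IsFix, IsFix, h.fst_apply, h.snd_apply, e.injective.eq_iff]

lemma not_isFix_iff (h : IsReduction e σ δ) (j : Fin n) :
    ¬ IsFix σ j ↔ ∃ i, ¬ IsFix δ i ∧ e i = j := by
  constructor
  · intro hj
    obtain ⟨i, rfl⟩ := not_imp_comm.mp (h.isFix_of_notMem_range j) hj
    exact ⟨i, by rwa [← h.isFix_apply_iff], rfl⟩
  · rintro ⟨i, hi, rfl⟩
    rwa [h.isFix_apply_iff]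

lemma rank_apply (h : IsReduction e σ δ) (v : Fin m) : rank σ (e v) = rank δ v := by
  rw [rank, rank, ← card_map e.toEmbedding]
  congr 1
  ext j
  simp only [mem_filter_univ, mem_map, h.not_isFix_iff, RelEmbedding.coe_toEmbedding]
  constructor
  · rintro ⟨⟨i, hi, rfl⟩, hlt⟩
    exact ⟨i, ⟨hi, e.lt_iff_lt.mp hlt⟩, rfl⟩
  · rintro ⟨i, ⟨hi, hlt⟩, rfl⟩
    exact ⟨⟨i, hi, rfl⟩, e.lt_iff_lt.mpr hlt⟩

lemma key_apply (h : IsReduction e σ δ) (i : Fin m) : key σ (e i) = key δ i := by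
  simp only [key, derKey, h.isFix_apply_iff, h.snd_apply, h.fst_apply, e.lt_iff_lt, h.rank_apply]

lemma filter_word_eq (h : IsReduction e σ δ) :
    (word σ).filter (· ≠ fixKey) = (word δ).filter (· ≠ fixKey) := by
  have hpos : (List.finRange n).filter (¬ IsFix σ ·)
      = ((List.finRange m).filter (¬ IsFix δ ·)).map e := by
    refine List.SortedLT.eq_of_mem_iff ?_ ?_ fun j => ?_
    · exact ((List.sortedLT_finRange n).pairwise.filter _).sortedLT
    · have hmono (i j : Fin m) : i < j → e i < e j := e.lt_iff_lt.mpr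
      exact (((List.sortedLT_finRange m).pairwise.filter _).map e hmono).sortedLT
    · simp [h.not_isFix_iff]
  rw [word, word, List.ofFn_eq_map, List.ofFn_eq_map, List.filter_map, List.filter_map]
  simp only [Function.comp_def, ne_eq, key_eq_fixKey_iff]
  rw [hpos, List.map_map]
  simp [h.key_apply]

end IsReduction

lemma filter_word_of_isDerangement {δ : CP ℓ n} (hδ : IsDerangement δ) :
    (word δ).filter (· ≠ fixKey) = word δ :=
  filter_ne_eq_self (fixKey_notMem_word hδ)

lemma isReduction_Der (σ : CP ℓ n) :
    IsReduction (((fixSet σ)ᶜ).orderEmbOfFin (card_nonfix σ)) σ (Der σ) where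
  fst_apply i := by
    -- A fixed point is its own value, so the remaining values are the remaining positions.
    have hvals : (((fixSet σ)ᶜ).image σ.1).orderEmbOfFin (card_vals σ)
        = ((fixSet σ)ᶜ).orderEmbOfFin (card_nonfix σ) := by
      refine orderEmbOfFin_unique' _ fun j => ?_
      obtain ⟨k, hk, hkj⟩ := mem_image.mp (orderEmbOfFin_mem _ (card_vals σ) j)
      rw [← hkj, mem_compl, mem_fixSet, isFix_apply_iff, ← mem_fixSet, ← mem_compl]
      exact hk
    rw [← DFunLike.congr_fun hvals ((Der σ).1 i), ← coe_orderIsoOfFin_apply,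
      ← coe_orderIsoOfFin_apply]
    exact congrArg Subtype.val ((orderIsoOfFin _ (card_vals σ)).apply_symm_apply
      (derMid σ (orderIsoOfFin _ (card_nonfix σ) i))).symm
  snd_apply _ := rfl
  isFix_of_notMem_range j hj := by
    rwa [range_orderEmbOfFin, mem_coe, mem_compl, not_not, mem_fixSet] at hj

lemma isDerangement_Der (σ : CP ℓ n) : IsDerangement (Der σ) := by
  intro i
  rw [← (isReduction_Der σ).isFix_apply_iff, ← mem_fixSet, ← mem_compl]
  exact orderEmbOfFin_mem _ _ _

lemma word_Der (σ : CP ℓ n) : word (Der σ) = (word σ).filter (· ≠ fixKey) := by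
  rw [(isReduction_Der σ).filter_word_eq, filter_word_of_isDerangement (isDerangement_Der σ)]

lemma exists_isDerangement_word_eq {σ : CP ℓ n} (hm : n - fix σ = m) :
    ∃ δ : CP ℓ m, IsDerangement δ ∧ word (Der σ) = word δ := by
  subst hm
  exact ⟨Der σ, isDerangement_Der σ, rfl⟩

section InsFix

variable [NeZero ℓ] (p : Fin (n + 1)) (τ : CP ℓ n)

lemma isFix_ins_same : IsFix (ins p p 0 τ) p := by simp [IsFix]

lemma exists_ins_eq_of_isFix {σ : CP ℓ (n + 1)} {p : Fin (n + 1)} (hp : IsFix σ p) :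
    ∃ τ, ins p p 0 τ = σ := by
  have hcolor : σ.2 p = 0 := Fin.ext hp.2
  simpa [hp.1, hcolor] using exists_ins_eq p σ

lemma isReduction_ins : IsReduction (Fin.succAboveOrderEmb p) (ins p p 0 τ) τ where
  fst_apply := ins_fst_succAbove p p 0 τ
  snd_apply := ins_snd_succAbove p p 0 τ
  isFix_of_notMem_range j hj := by
    rw [Fin.range_succAboveOrderEmb, Set.notMem_compl_iff, Set.mem_singleton_iff] at hj
    exact hj ▸ isFix_ins_same p τ

lemma word_ins : word (ins p p 0 τ) = (word τ).insertIdx p fixKey := by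
  rw [word, ofFn_eq_insertIdx_succAbove p, key_eq_fixKey_iff.mpr (isFix_ins_same p τ)]
  exact congrArg (fun g => (List.ofFn g).insertIdx p fixKey)
    (funext fun i => (isReduction_ins p τ).key_apply i)

lemma word_injective : Function.Injective (word : CP ℓ n → List Key) := by
  induction n with
  | zero => exact Function.injective_of_subsingleton _
  | succ n ih =>
    intro σ σ' h
    have hfix (i) : IsFix σ i ↔ IsFix σ' i := by
      rw [← key_eq_fixKey_iff, ← key_eq_fixKey_iff, congrFun (List.ofFn_injective h) i]
    by_cases hσ : IsDerangement σ
    · exact word_injOn_derangements hσ (fun i => by rw [← hfix]; exact hσ i) h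
    · obtain ⟨p, hp⟩ : ∃ p, IsFix σ p := by simpa using hσ
      obtain ⟨τ, rfl⟩ := exists_ins_eq_of_isFix hp
      obtain ⟨τ', rfl⟩ := exists_ins_eq_of_isFix ((hfix p).mp hp)
      rw [word_ins, word_ins] at h
      rw [ih (List.insertIdx_injective _ _ h)]

lemma exists_word_eq {δ : CP ℓ m} (hδ : IsDerangement δ) {k : ℕ} {s : List Key}
    (hs : s ∈ shuffles fixKey k (word δ)) : ∃ σ : CP ℓ (m + k), word σ = s := by
  induction k generalizing s with
  | zero =>
    rw [shuffles_zero (fixKey_notMem_word hδ), mem_singleton] at hs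
    exact ⟨δ, hs.symm⟩
  | succ k ih =>
    obtain ⟨hlen, hfilter⟩ := mem_shuffles.mp hs
    have hmem : fixKey ∈ s := by
      by_contra hs'
      rw [← hfilter, filter_ne_eq_self hs'] at hlen
      omega
    obtain ⟨a, b, rfl⟩ := List.append_of_mem hmem
    simp only [List.length_append, List.length_cons] at hlen
    obtain ⟨τ, hτ⟩ := ih (s := a ++ b) (mem_shuffles.mpr
      ⟨by rw [List.length_append]; omega, by simpa using hfilter⟩)
    have hlt : a.length < m + k + 1 := by
      rw [word, List.length_ofFn] at hlen
      omega
    exact ⟨ins ⟨a.length, hlt⟩ ⟨a.length, hlt⟩ 0 τ, by rw [word_ins, hτ, insertIdx_append_length]⟩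

end InsFix

end Word

end CP

namespace CP

section Wachs

variable {ℓ n m : ℕ}

lemma fix_eq_iff_exists_word_mem_shuffles {k : ℕ} {σ : CP ℓ (m + k)} :
    fix σ = k ↔ ∃ δ : CP ℓ m, IsDerangement δ ∧ word σ ∈ shuffles fixKey k (word δ) := by
  have hmem (δ : CP ℓ m) : word σ ∈ shuffles fixKey k (word δ) ↔ word (Der σ) = word δ := by
    rw [mem_shuffles, word_Der, and_iff_right (by simp [word])]
  simp only [hmem]
  constructor
  · intro hσ
    exact exists_isDerangement_word_eq (by omega)
  · rintro ⟨δ, -, hδ⟩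
    have hlen := congrArg List.length hδ
    have hle := fix_le σ
    rw [word, word, List.length_ofFn, List.length_ofFn] at hlen
    omega

lemma sum_fix_eq_sum_shuffles [NeZero ℓ] {M : Type*} [AddCommMonoid M] (m k : ℕ)
    (F : List Key → M) :
    ∑ σ : CP ℓ (m + k) with fix σ = k, F (word σ)
      = ∑ δ : CP ℓ m with IsDerangement δ, ∑ s ∈ shuffles fixKey k (word δ), F s := by
  rw [← sum_biUnion]
  · refine sum_nbij word (fun σ hσ => ?_) word_injective.injOn (fun s hs => ?_) fun _ _ => rfl
    · rw [mem_filter_univ, fix_eq_iff_exists_word_mem_shuffles] at hσ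
      simpa only [mem_biUnion, mem_filter_univ] using hσ
    · obtain ⟨δ, hδ, hs⟩ := mem_biUnion.mp hs
      rw [mem_filter_univ] at hδ
      obtain ⟨σ, rfl⟩ := exists_word_eq hδ hs
      refine ⟨σ, ?_, rfl⟩
      rw [mem_coe, mem_filter_univ, fix_eq_iff_exists_word_mem_shuffles]
      exact ⟨δ, hδ, hs⟩
  · intro δ _ δ' _ hne
    refine disjoint_left.mpr fun s hs hs' => hne (word_injective ?_)
    rw [← (mem_shuffles.mp hs).2, (mem_shuffles.mp hs').2]

/-- The sum of the colors of the letters of a word of keys. -/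
def wordCol (s : List Key) : ℕ := (s.map fun k => OrderDual.ofDual (ofLex (ofLex k).2).1).sum

lemma col_eq_wordCol_word (σ : CP ℓ n) : col σ = wordCol (word σ) := by
  rw [wordCol, word, List.map_ofFn, List.sum_ofFn, col]
  refine sum_congr rfl fun i _ => ?_
  by_cases hi : IsFix σ i
  · simp [key, hi, hi.2, fixKey]
  · simp [key, hi, derKey]

lemma wordCol_of_mem_shuffles {k : ℕ} {L s : List Key} (hs : s ∈ shuffles fixKey k L) :
    wordCol s = wordCol L := by
  rw [wordCol, ((perm_of_mem_shuffles hs).map _).sum_eq]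
  simp [wordCol, fixKey]

variable {R : Type*} [CommSemiring R]

lemma sum_shuffles_word_pow_fmaj {δ : CP ℓ m} (hδ : IsDerangement δ) (q : R) (k : ℕ) :
    ∑ s ∈ shuffles fixKey k (word δ), q ^ (ℓ * wordMaj s + wordCol s)
      = qbinom (q ^ ℓ) (m + k) k * q ^ fmaj δ := by
  have hlen : (word δ).length = m := List.length_ofFn
  calc ∑ s ∈ shuffles fixKey k (word δ), q ^ (ℓ * wordMaj s + wordCol s)
    _ = (∑ s ∈ shuffles fixKey k (word δ), (q ^ ℓ) ^ wordMaj s) * q ^ wordCol (word δ) := by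
      rw [sum_mul]
      refine sum_congr rfl fun s hs => ?_
      rw [pow_add, pow_mul, wordCol_of_mem_shuffles hs]
    _ = qbinom (q ^ ℓ) (m + k) k * q ^ fmaj δ := by
      rw [sum_shuffles_pow_wordMaj _ (fixKey_notMem_word hδ), hlen, fmaj, col_eq_wordCol_word,
        maj_eq_wordMaj_word, pow_add, pow_mul]
      ring

/-- The generating function of the flag major index over colored derangements. -/
def derPoly (q : R) (ℓ n : ℕ) : R := ∑ δ : CP ℓ n with IsDerangement δ, q ^ fmaj δ

lemma sum_fix_eq_pow_fmaj [NeZero ℓ] (q : R) (m k : ℕ) :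
    ∑ σ : CP ℓ (m + k) with fix σ = k, q ^ fmaj σ
      = qbinom (q ^ ℓ) (m + k) k * derPoly q ℓ m := by
  simp only [fmaj, maj_eq_wordMaj_word, col_eq_wordCol_word]
  rw [sum_fix_eq_sum_shuffles m k fun s => q ^ (ℓ * wordMaj s + wordCol s), derPoly, mul_sum]
  exact sum_congr rfl fun δ hδ => sum_shuffles_word_pow_fmaj ((mem_filter_univ δ).mp hδ) q k

theorem qfac_eq_sum_qbinom_mul_derPoly [NeZero ℓ] (q : R) (n : ℕ) :
    qfac q ℓ n = ∑ k ∈ range (n + 1), qbinom (q ^ ℓ) n k * derPoly q ℓ (n - k) := by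
  rw [← sum_pow_fmaj, ← sum_fiberwise_of_maps_to (g := fix) (t := range (n + 1))
    fun σ _ => mem_range_succ_iff.mpr (fix_le σ)]
  refine sum_congr rfl fun k hk => ?_
  obtain ⟨m, rfl⟩ := Nat.exists_eq_add_of_le' (mem_range_succ_iff.mp hk)
  rw [sum_fix_eq_pow_fmaj, Nat.add_sub_cancel]

end Wachs

end CP

/-! ### Deleting the first fixed point -/

lemma choose_two_le_sum (s : Finset ℕ) : (#s).choose 2 ≤ ∑ i ∈ s, i := by
  induction s using Finset.induction_on_max with
  | empty => simp
  | insert a s hmax ih =>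
    have hcard : #s ≤ a := by
      simpa using card_le_card (t := range a) fun x hx => mem_range.mpr (hmax x hx)
    have ha : a ∉ s := fun ha => lt_irrefl a (hmax a ha)
    rw [card_insert_of_notMem ha, sum_insert ha, Nat.choose_succ_succ' _ 1, Nat.choose_one_right,
      one_add_one_eq_two]
    omega

namespace CP

section Fmaf

variable {ℓ n : ℕ}

lemma choose_fix_two_le (σ : CP ℓ n) : (fix σ).choose 2 ≤ ∑ i ∈ fixSet σ, (i : ℕ) := by
  simpa [fix] using choose_two_le_sum ((fixSet σ).map Fin.valEmbedding)

lemma maj_Der (σ : CP ℓ n) : maj (Der σ) = wordMaj ((word σ).filter (· ≠ fixKey)) := by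
  rw [maj_eq_wordMaj_word, word_Der]

lemma fmaf_of_isDerangement {δ : CP ℓ n} (hδ : IsDerangement δ) : fmaf δ = fmaj δ := by
  have hempty : fixSet δ = ∅ := card_eq_zero.mp (fix_eq_zero_iff.mpr hδ)
  have hmaj : maj (Der δ) = maj δ := by
    rw [maj_Der, filter_word_of_isDerangement hδ, maj_eq_wordMaj_word]
  simp [fmaf, maf, fmaj, hmaj, hempty]

section InsFix

variable [NeZero ℓ] (p : Fin (n + 1)) (τ : CP ℓ n)

lemma isFix_ins_succAbove (i : Fin n) : IsFix (ins p p 0 τ) (p.succAbove i) ↔ IsFix τ i :=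
  (isReduction_ins p τ).isFix_apply_iff i

lemma fixSet_ins : fixSet (ins p p 0 τ) = insert p ((fixSet τ).map p.succAboveEmb) := by
  ext j
  rcases Fin.eq_self_or_eq_succAbove p j with rfl | ⟨i, rfl⟩
  · simp [mem_fixSet, isFix_ins_same]
  · simp [mem_fixSet, isFix_ins_succAbove, Fin.succAbove_ne]

lemma fix_ins : fix (ins p p 0 τ) = fix τ + 1 := by
  rw [fix, fixSet_ins, card_insert_of_notMem (by simp [Fin.succAbove_ne]), card_map, fix]

lemma maj_Der_ins : maj (Der (ins p p 0 τ)) = maj (Der τ) := by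
  rw [maj_Der, maj_Der, (isReduction_ins p τ).filter_word_eq]

variable {p τ}

lemma sum_fixSet_ins (hp : ∀ i : Fin n, (i : ℕ) < p → ¬ IsFix τ i) :
    ∑ i ∈ fixSet (ins p p 0 τ), (i : ℕ) = p + (∑ i ∈ fixSet τ, (i : ℕ) + fix τ) := by
  rw [fixSet_ins, sum_insert (by simp [Fin.succAbove_ne]), sum_map, fix, card_eq_sum_ones,
    ← sum_add_distrib]
  congr 1
  refine sum_congr rfl fun i hi => ?_
  have hpi : p ≤ i.castSucc := by
    by_contra! hlt
    exact hp i hlt (mem_fixSet.mp hi)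
  rw [Fin.coe_succAboveEmb, Fin.succAbove_of_le_castSucc _ _ hpi, Fin.val_succ]

/-- The other fixed points move up by one position, which their increased index compensates. -/
lemma fmaf_ins (hp : ∀ i : Fin n, (i : ℕ) < p → ¬ IsFix τ i) :
    fmaf (ins p p 0 τ) = ℓ * p + fmaf τ := by
  have hchoose := choose_fix_two_le τ
  have hmaf : maf (ins p p 0 τ) = p + maf τ := by
    rw [maf, maf, maj_Der_ins, sum_fixSet_ins hp, fix_ins, Nat.choose_succ_succ' _ 1,
      Nat.choose_one_right, one_add_one_eq_two]
    omega
  rw [fmaf, fmaf, hmaf, col_ins, Fin.val_zero]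
  ring

lemma forall_lt_not_isFix_ins_iff :
    (∀ i : Fin (n + 1), (i : ℕ) < p → ¬ IsFix (ins p p 0 τ) i)
      ↔ ∀ i : Fin n, (i : ℕ) < p → ¬ IsFix τ i := by
  have hlt (i : Fin n) : p.succAbove i < p ↔ (i : ℕ) < p := Fin.succAbove_lt_iff_castSucc_lt p i
  simp [Fin.forall_iff_succAbove p, isFix_ins_succAbove, hlt]

end InsFix

variable {R : Type*} [CommSemiring R] (q x : R)

/-- The generating function of `(fmaf, fix)` over the colored permutations that have no fixed point
at the (0-based) positions less than `j`. -/
def fmafSum (ℓ n j : ℕ) : R :=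
  ∑ σ : CP ℓ n with ∀ i : Fin n, (i : ℕ) < j → ¬ IsFix σ i, q ^ fmaf σ * x ^ fix σ

lemma fmafSum_self (n : ℕ) : fmafSum q x ℓ n n = derPoly q ℓ n := by
  simp only [fmafSum, Fin.is_lt, forall_const, derPoly]
  refine sum_congr rfl fun δ hδ => ?_
  rw [mem_filter_univ] at hδ
  rw [fmaf_of_isDerangement hδ, fix_eq_zero_iff.mpr hδ, pow_zero, mul_one]

lemma sum_first_fix_eq_mul_fmafSum [NeZero ℓ] (p : Fin (n + 1)) :
    ∑ σ : CP ℓ (n + 1) with (∀ i : Fin (n + 1), (i : ℕ) < p → ¬ IsFix σ i) ∧ IsFix σ p,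
        q ^ fmaf σ * x ^ fix σ
      = x * q ^ (ℓ * p) * fmafSum q x ℓ n p := by
  rw [sum_ins p p 0 _ fun σ hσ => ⟨hσ.2.1, Fin.ext hσ.2.2⟩, fmafSum, mul_sum]
  simp only [forall_lt_not_isFix_ins_iff, isFix_ins_same, and_true]
  refine sum_congr rfl fun τ hτ => ?_
  rw [fmaf_ins ((mem_filter_univ τ).mp hτ), fix_ins]
  ring

lemma fmafSum_succ [NeZero ℓ] {j : ℕ} (hj : j ≤ n) :
    fmafSum q x ℓ (n + 1) j
      = fmafSum q x ℓ (n + 1) (j + 1) + x * q ^ (ℓ * j) * fmafSum q x ℓ n j := by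
  obtain ⟨p, rfl⟩ : ∃ p : Fin (n + 1), (p : ℕ) = j := ⟨⟨j, by omega⟩, rfl⟩
  have hsucc (σ : CP ℓ (n + 1)) : (∀ i : Fin (n + 1), (i : ℕ) < p + 1 → ¬ IsFix σ i)
      ↔ (∀ i : Fin (n + 1), (i : ℕ) < p → ¬ IsFix σ i) ∧ ¬ IsFix σ p := by
    simp only [Nat.lt_succ_iff_lt_or_eq, Fin.val_inj, or_imp, forall_and, forall_eq]
  rw [← sum_first_fix_eq_mul_fmafSum]
  simp only [fmafSum, hsucc]
  rw [← filter_filter, ← filter_filter, sum_filter_not_add_sum_filter]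

lemma fmafSum_zero_right [NeZero ℓ] (n : ℕ) :
    fmafSum q x ℓ n 0 = ∑ k ∈ range (n + 1), x ^ k * qbinom (q ^ ℓ) n k * derPoly q ℓ (n - k) := by
  have h := eq_sum_qbinom_of_recurrence (Q := q ^ ℓ) (x := x) (A := fmafSum q x ℓ)
    (fun _ _ hj => by rw [fmafSum_succ q x hj, pow_mul]) n 0
  simpa [fmafSum_self] using h

end Fmaf

open MvPolynomial in
lemma gPoly_eq_fmafSum (ℓ n : ℕ) [NeZero ℓ] : gPoly ℓ n = fmafSum (X 0) (X 1) ℓ n 0 := by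
  rw [fmafSum_zero_right, ← sum_prod_sub_mul_sum_qbinom, gPoly]
  refine sum_congr rfl fun k hk => ?_
  obtain ⟨m, rfl⟩ := Nat.exists_eq_add_of_le' (mem_range_succ_iff.mp hk)
  rw [prod_Icc_qint, ← qfac_eq_sum_qbinom_mul_derPoly, Nat.add_sub_cancel]
  simp only [pow_mul]

end CP

open MvPolynomial in
/-- With the table `G n m = g_{ℓ,n}^m(q,x)` defined by the diagonal values
`g_{ℓ,n}^n = g_{ℓ,n}` and the recurrence
`g_{ℓ,n}^m = g_{ℓ,n}^{m+1} − x·q^{ℓ(n−m−1)}·g_{ℓ,n−1}^m`, for `0 ≤ m ≤ n` one has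
`g_{ℓ,n}^m(q,x) = Σ_{σ ∈ G_{ℓ,n}^m} q^{fmaf σ} x^{fix σ}`, where `G_{ℓ,n}^m` consists of the
colored permutations with `σ(i) ≠ i` for all (1-based) `i ≤ n−m`. -/
theorem q_difference_table_combinatorial_interpretation (ℓ : ℕ) (hℓ : 1 ≤ ℓ)
    (G : ℕ → ℕ → MvPolynomial (Fin 2) ℤ)
    (hdiag : ∀ n, G n n = gPoly ℓ n)
    (hrec : ∀ n m, m < n →
      G n m = G n (m + 1) - X 1 * (X 0 : MvPolynomial (Fin 2) ℤ) ^ (ℓ * (n - m - 1)) * G (n - 1) m) :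
    ∀ n m, m ≤ n →
      G n m = ∑ σ ∈ (univ : Finset (CP ℓ n)).filter
          (fun σ => ∀ i : Fin n, (i : ℕ) < n - m → ¬(σ.1 i = i ∧ (σ.2 i : ℕ) = 0)),
        (X 0 : MvPolynomial (Fin 2) ℤ) ^ CP.fmaf σ * (X 1) ^ CP.fix σ := by
  have : NeZero ℓ := ⟨by omega⟩
  suffices h : ∀ n m, m ≤ n → G n m = CP.fmafSum (X 0) (X 1) ℓ n (n - m) from h
  have hself (n : ℕ) : G n n = CP.fmafSum (X 0) (X 1) ℓ n (n - n) := by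
    rw [hdiag, CP.gPoly_eq_fmafSum, Nat.sub_self]
  intro n
  induction n with
  | zero =>
    intro m hm
    obtain rfl : m = 0 := by omega
    exact hself 0
  | succ n ihn =>
    intro m hm
    induction hm using Nat.decreasingInduction with
    | self => exact hself (n + 1)
    | of_succ m hm ih =>
      have hmn : m ≤ n := Nat.lt_succ_iff.mp hm
      rw [hrec (n + 1) m hm, ih, Nat.add_sub_cancel, ihn m hmn, Nat.add_sub_add_right,
        Nat.succ_sub hmn, Nat.succ_sub_one, CP.fmafSum_succ _ _ (Nat.sub_le n m)]
      ring
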